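/- Assume p ∤ (m/t), d | h, and a ≠ 0, and set a_0 = −(m/t)·a^{−1} ∈ F_q^* (with m/t taken mod p). Then M_t = Σ_{λ ∈ H_{s/d}} G_t(λ̄) · G_1(λ^t) · λ(a_0^t · g^{i_0}) = 1 + (−1)^{t−1} · q · Σ_{λ ∈ H_{s/d}^*} J_t(λ̄) · λ((−a_0)^t · g^{i_0}). -/

import Mathlib

noncomputable section

open Complex Polynomial Classical

/-- The canonical additive character `x ↦ exp(2πi·tr(x)/p)` of a finite field `E`
of characteristic `p` (the prime field being `ZMod p`). -/
def eChar (p : ℕ) (E : Type*) [Field E] [Fintype E] [Algebra (ZMod p) E] (x : E) : ℂ :=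
  Complex.exp (2 * Real.pi * Complex.I * ((Algebra.trace (ZMod p) E x).val : ℂ) / (p : ℂ))

/-- The Gauss sum `G_t(λ) = Σ_{x ∈ E^*} e_t(x)·λ(N_{E/F}(x))` over `E`, for a
multiplicative character `λ` of `F`.  Taking `E = F` gives the usual Gauss sum `G_1`. -/
def gaussSumN (p : ℕ) (F E : Type*) [Field F] [Fintype F] [Field E] [Fintype E]
    [Algebra F E] [Algebra (ZMod p) E] (lam : MulChar F ℂ) : ℂ :=
  ∑ x : Eˣ, eChar p E (x : E) * lam (Algebra.norm F (x : E))

/-- The Jacobi sum `J_t(λ) = Σ_{x_1+⋯+x_t=1} λ(x_1⋯x_t)` (with `λ(0) = 0` for nontrivial λ). -/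
def jacobiS (F : Type*) [Field F] [Fintype F] (t : ℕ) (lam : MulChar F ℂ) : ℂ :=
  ∑ v : Fin t → F, if (∑ i, v i) = 1 then lam (∏ i, v i) else 0

/-- `M_t = Σ_{c∈F^*} e_1(−(t/m)·c·a)·Σ_{x∈E^*} e_t(c·γ^{i_0}·x^{s/d})`, where
`mt = m/t`, `sd = s/d` and `(t/m)` is the inverse of `m/t` in the prime field. -/
def MM (p : ℕ) (F E : Type*) [Field F] [Fintype F] [Field E] [Fintype E]
    [Algebra F E] [Algebra (ZMod p) F] [Algebra (ZMod p) E]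
    (γ : E) (a : F) (mt sd i0 : ℕ) : ℂ :=
  ∑ c : Fˣ, eChar p F (-(((mt : F))⁻¹ * c * a)) *
    ∑ x : Eˣ, eChar p E (algebraMap F E (c : F) * γ ^ i0 * (x : E) ^ sd)

/-!
Set `ψ` to be the canonical additive character of `F` and `t` the degree of `E / F`. Substituting
the variable `c` in `M_t` turns the first formula into the evaluation of `∑ x : Eˣ, e_t (y * x ^ n)`
for a divisor `n` of `q - 1`. An element of `Eˣ` and its norm have the same number of `n`-th roots,
in `E` and in `F` respectively, so by orthogonality the number of solutions of `x ^ n = w` is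
`∑ λ (N w)` over the characters `λ` of `F` with `λ ^ n = 1`, and the sum becomes a combination of
the Gauss sums `G_t`.

The second formula needs the Hasse-Davenport relation `G_t(λ) = (-1) ^ (t - 1) * G_1(λ) ^ t`. Extend
`λ` and `ψ` to a completely multiplicative function on monic polynomials over `F`, sending
`X ^ n - a * X ^ (n - 1) + ⋯ + (-1) ^ n * b` to `λ b * ψ a`. Its sum over the monic polynomials of
degree `n` is `1`, `G_1(λ)` and `0` for `n = 0`, `n = 1` and `n ≥ 2`, so its generating series is
`L(T) = 1 + G_1(λ) * T`. Weighted by the von Mangoldt function, the sum in degree `t` is `G_t(λ)`,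
which by unique factorisation is the coefficient of `T ^ t` in `T * L'(T) / L(T)`.
Expanding `G_1(λ⁻¹) ^ t * G_1(λ ^ t)` finally produces the Jacobi sum.
-/

section MonicPolynomials

variable {A R : Type*} [CommRing A] [Nontrivial A] [Finite A]

theorem finite_setOf_monic_natDegree_eq (n : ℕ) :
    {f : A[X] | f.Monic ∧ f.natDegree = n}.Finite :=
  .of_equiv _ ((monicEquivDegreeLT n).trans (degreeLTEquiv A n).toEquiv).symm

variable (A) in
/-- The set of monic polynomials of degree `n` over a finite ring, as a `Finset` so that one can
sum over it. -/
def monicsOfDegree (n : ℕ) : Finset A[X] :=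
  (finite_setOf_monic_natDegree_eq n).toFinset

theorem mem_monicsOfDegree {n : ℕ} {f : A[X]} :
    f ∈ monicsOfDegree A n ↔ f.Monic ∧ f.natDegree = n := by
  simp [monicsOfDegree]

theorem monicsOfDegree_zero : monicsOfDegree A 0 = {1} := by
  ext f
  rw [mem_monicsOfDegree, Finset.mem_singleton]
  exact ⟨fun ⟨hf, h⟩ => hf.natDegree_eq_zero.mp h, by rintro rfl; simp⟩

/-- The sum of `L` over the monic polynomials of degree `n`, i.e. the coefficient of `T ^ n` in the
`L`-series `∑ L f * T ^ deg f` over monic `f`. -/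
def monicSum [AddCommMonoid R] (L : A[X] → R) (n : ℕ) : R :=
  ∑ f ∈ monicsOfDegree A n, L f

theorem mul_X_add_C_mem_monicsOfDegree {n : ℕ} {g : A[X]} (hg : g ∈ monicsOfDegree A n) (c : A) :
    g * X + C c ∈ monicsOfDegree A (n + 1) := by
  obtain ⟨hmonic, rfl⟩ := mem_monicsOfDegree.mp hg
  have hdeg : (C c).degree < (g * X).degree := by
    rw [degree_mul_X, degree_eq_natDegree hmonic.ne_zero]
    exact degree_C_le.trans_lt (by exact_mod_cast Nat.succ_pos _)
  exact mem_monicsOfDegree.mpr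
    ⟨(hmonic.mul monic_X).add_of_left hdeg, by rw [natDegree_add_C, natDegree_mul_X hmonic.ne_zero]⟩

theorem divX_mem_monicsOfDegree {n : ℕ} {f : A[X]} (hf : f ∈ monicsOfDegree A (n + 1)) :
    f.divX ∈ monicsOfDegree A n := by
  obtain ⟨hf, hn⟩ := mem_monicsOfDegree.mp hf
  have hdeg : f.divX.natDegree = n := by
    rw [natDegree_divX_eq_natDegree_tsub_one, hn, Nat.add_sub_cancel]
  refine mem_monicsOfDegree.mpr ⟨?_, hdeg⟩
  rw [Monic, leadingCoeff, hdeg, coeff_divX, ← hn, hf.coeff_natDegree]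

theorem monicSum_zero [AddCommMonoid R] (L : A[X] → R) : monicSum L 0 = L 1 := by
  rw [monicSum, monicsOfDegree_zero, Finset.sum_singleton]

theorem monicSum_succ [Fintype A] [AddCommMonoid R] (L : A[X] → R) (n : ℕ) :
    monicSum L (n + 1) = ∑ g ∈ monicsOfDegree A n, ∑ c : A, L (g * X + C c) := by
  rw [monicSum, ← Finset.sum_product']
  refine Finset.sum_bij' (fun f _ => (f.divX, f.coeff 0)) (fun gc _ => gc.1 * X + C gc.2)
    (fun f hf => ?_) (fun gc hgc => ?_) (fun f _ => ?_) (fun gc _ => ?_) (fun f _ => ?_)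
  · exact Finset.mk_mem_product (divX_mem_monicsOfDegree hf) (Finset.mem_univ _)
  · exact mul_X_add_C_mem_monicsOfDegree (Finset.mem_product.mp hgc).1 gc.2
  · exact divX_mul_X_add f
  · ext <;> simp [coeff_divX, coeff_C]
  · rw [divX_mul_X_add]

theorem sum_monicsOfDegree_dvd [NonUnitalNonAssocSemiring R] {L : A[X] → R}
    (hL : ∀ f g : A[X], f.Monic → g.Monic → L (f * g) = L f * L g)
    {i j : ℕ} {g : A[X]} (hg : g ∈ monicsOfDegree A i) :
    ∑ f ∈ monicsOfDegree A (i + j) with g ∣ f, L f = L g * monicSum L j := by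
  obtain ⟨hmonic, rfl⟩ := mem_monicsOfDegree.mp hg
  rw [monicSum, Finset.mul_sum]
  symm
  refine Finset.sum_bij (fun f _ => g * f) (fun f hf => ?_)
    (fun f₁ _ f₂ _ h => hmonic.isRegular.left h) (fun f hf => ?_) (fun f hf => ?_)
  · obtain ⟨hf', rfl⟩ := mem_monicsOfDegree.mp hf
    exact Finset.mem_filter.mpr
      ⟨mem_monicsOfDegree.mpr ⟨hmonic.mul hf', hmonic.natDegree_mul hf'⟩, dvd_mul_right g f⟩
  · obtain ⟨hf, f', rfl⟩ := Finset.mem_filter.mp hf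
    obtain ⟨hf, hdeg⟩ := mem_monicsOfDegree.mp hf
    have hf' : f'.Monic := hmonic.of_mul_monic_left hf
    rw [hmonic.natDegree_mul hf'] at hdeg
    exact ⟨f', mem_monicsOfDegree.mpr ⟨hf', Nat.add_left_cancel hdeg⟩, rfl⟩
  · exact (hL g f hmonic (mem_monicsOfDegree.mp hf).1).symm

end MonicPolynomials

section VonMangoldt

variable {F : Type*} [Field F]

open UniqueFactorizationMonoid

/-- The von Mangoldt function of `F[X]`, with the degree in the role of the logarithm: it is
`deg P` at (associates of) positive powers of an irreducible `P`, and `0` at other polynomials. -/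
def polyVonMangoldt (f : F[X]) : ℕ :=
  if IsPrimePow f then (radical f).natDegree else 0

theorem polyVonMangoldt_pow {P : F[X]} (hP : Irreducible P) {k : ℕ} (hk : k ≠ 0) :
    polyVonMangoldt (P ^ k) = P.natDegree := by
  rw [polyVonMangoldt, if_pos (hP.prime.isPrimePow.pow hk), radical_pow_of_prime hP.prime hk,
    natDegree_eq_of_degree_eq degree_normalize]

theorem exists_pow_eq_of_polyVonMangoldt_ne_zero {f : F[X]} (hf : f.Monic)
    (h : polyVonMangoldt f ≠ 0) :
    ∃ (P : F[X]) (k : ℕ), P.Monic ∧ Irreducible P ∧ k ≠ 0 ∧ P ^ k = f := by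
  obtain ⟨P, k, hP, hk, rfl⟩ : IsPrimePow f := by
    by_contra hpow
    exact h (if_neg hpow)
  exact ⟨normalize P, k, monic_normalize hP.ne_zero,
    (associated_normalize P).irreducible hP.irreducible, hk.ne', by
      rw [← coe_normalizeHom, ← map_pow, coe_normalizeHom, hf.normalize_eq_self]⟩

theorem pow_dvd_iff_le_count_normalizedFactors {f P : F[X]} (hf : f ≠ 0) (hP : Irreducible P)
    (hPm : P.Monic) (k : ℕ) : P ^ k ∣ f ↔ k ≤ (normalizedFactors f).count P := by
  rw [pow_dvd_iff_le_emultiplicity, emultiplicity_eq_count_normalizedFactors hP hf,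
    hPm.normalize_eq_self, Nat.cast_le]

theorem natDegree_eq_sum_count_normalizedFactors {f : F[X]} (hf : f.Monic) :
    f.natDegree =
      ∑ P ∈ (normalizedFactors f).toFinset, (normalizedFactors f).count P * P.natDegree := by
  have hmonic : ∀ P ∈ normalizedFactors f, P.Monic := fun P hP =>
    ((Polynomial.mem_normalizedFactors_iff hf.ne_zero).mp hP).2.1
  have hprod : (normalizedFactors f).prod = f := by
    rw [prod_normalizedFactors_eq hf.ne_zero, hf.normalize_eq_self]
  conv_lhs => rw [← hprod, natDegree_multiset_prod_of_monic _ hmonic]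
  rw [Finset.sum_multiset_map_count]
  rfl

theorem pow_eq_pow_iff_of_irreducible {P Q : F[X]} (hP : Irreducible P) (hQ : Irreducible Q)
    (hPm : P.Monic) (hQm : Q.Monic) {k l : ℕ} (hk : k ≠ 0) :
    P ^ k = Q ^ l ↔ P = Q ∧ k = l := by
  refine ⟨fun h => ?_, fun ⟨hPQ, hkl⟩ => hPQ ▸ hkl ▸ rfl⟩
  have hdvd : P ∣ Q := hP.prime.dvd_of_dvd_pow (h ▸ dvd_pow_self P hk)
  obtain rfl : P = Q := eq_of_monic_of_associated hPm hQm (hP.associated_of_dvd hQ hdvd)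
  have hdeg := congrArg natDegree h
  rw [natDegree_pow, natDegree_pow] at hdeg
  exact ⟨rfl, Nat.eq_of_mul_eq_mul_right hP.natDegree_pos hdeg⟩

theorem natDegree_eq_sum_polyVonMangoldt {f : F[X]} (hf : f.Monic) {D : Finset F[X]}
    (hD : ∀ g, g ∈ D ↔ g.Monic ∧ g ∣ f) : f.natDegree = ∑ g ∈ D, polyVonMangoldt g := by
  set M := normalizedFactors f
  have hdeg : f.natDegree =
      ∑ x ∈ M.toFinset.sigma fun P => Finset.Icc 1 (M.count P), x.1.natDegree := by
    simp [natDegree_eq_sum_count_normalizedFactors hf, Finset.sum_sigma, M]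
  have hmem {x : Σ _ : F[X], ℕ} (hx : x ∈ M.toFinset.sigma fun P => Finset.Icc 1 (M.count P)) :
      x.1.Monic ∧ Irreducible x.1 ∧ x.2 ≠ 0 ∧ x.2 ≤ M.count x.1 := by
    simp only [Finset.mem_sigma, Multiset.mem_toFinset, Finset.mem_Icc] at hx
    obtain ⟨hP, hPm, -⟩ := (Polynomial.mem_normalizedFactors_iff hf.ne_zero).mp hx.1
    exact ⟨hPm, hP, Nat.one_le_iff_ne_zero.mp hx.2.1, hx.2.2⟩
  rw [hdeg]
  refine Finset.sum_of_injOn (fun x => x.1 ^ x.2) (fun x hx y hy hxy => ?_) (fun x hx => ?_)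
    (fun g hg hgx => ?_) (fun x hx => ?_)
  · obtain ⟨hxm, hxi, hx0, -⟩ := hmem hx
    obtain ⟨hym, hyi, -, -⟩ := hmem hy
    obtain ⟨h₁, h₂⟩ := (pow_eq_pow_iff_of_irreducible hxi hyi hxm hym hx0).mp hxy
    exact Sigma.ext h₁ (heq_of_eq h₂)
  · obtain ⟨hxm, hxi, -, hxM⟩ := hmem hx
    exact (hD _).mpr ⟨hxm.pow _,
      (pow_dvd_iff_le_count_normalizedFactors hf.ne_zero hxi hxm _).mpr hxM⟩
  · by_contra hΛ
    obtain ⟨hgm, hgf⟩ := (hD g).mp hg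
    obtain ⟨P, k, hPm, hP, hk, rfl⟩ := exists_pow_eq_of_polyVonMangoldt_ne_zero hgm hΛ
    refine hgx ⟨⟨P, k⟩, ?_, rfl⟩
    have hPM : P ∈ M := (Polynomial.mem_normalizedFactors_iff hf.ne_zero).mpr
      ⟨hP, hPm, (dvd_pow_self P hk).trans hgf⟩
    have hkM : k ≤ M.count P :=
      (pow_dvd_iff_le_count_normalizedFactors hf.ne_zero hP hPm k).mp hgf
    simpa using ⟨hPM, Nat.one_le_iff_ne_zero.mpr hk, hkM⟩
  · obtain ⟨-, hxi, hx0, -⟩ := hmem hx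
    exact (polyVonMangoldt_pow hxi hx0).symm

end VonMangoldt

section NewtonIdentity

open Finset.HasAntidiagonal

variable {F R : Type*} [Field F] [Finite F]

/-- The sum over the monic polynomials of degree `n` of `L` weighted by the von Mangoldt function,
i.e. the coefficient of `T ^ n` in the logarithmic derivative of the `L`-series of `L`. -/
def vonMangoldtSum [Semiring R] (L : F[X] → R) (n : ℕ) : R :=
  ∑ f ∈ monicsOfDegree F n, (polyVonMangoldt f : R) * L f

theorem sum_antidiagonal_polyVonMangoldt {n : ℕ} {f : F[X]} (hf : f ∈ monicsOfDegree F n) :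
    ∑ ij ∈ antidiagonal n, ∑ g ∈ monicsOfDegree F ij.1 with g ∣ f, polyVonMangoldt g =
      n := by
  obtain ⟨hmonic, rfl⟩ := mem_monicsOfDegree.mp hf
  have hdisj : (Finset.range (f.natDegree + 1) : Set ℕ).PairwiseDisjoint
      fun i => {g ∈ monicsOfDegree F i | g ∣ f} := by
    refine fun i _ j _ hij => Finset.disjoint_left.mpr fun g hgi hgj => hij ?_
    rw [Finset.mem_filter, mem_monicsOfDegree] at hgi hgj
    exact hgi.1.2.symm.trans hgj.1.2
  rw [Finset.Nat.sum_antidiagonal_eq_sum_range_succ_mk, ← Finset.sum_biUnion hdisj]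
  refine (natDegree_eq_sum_polyVonMangoldt hmonic fun g => ?_).symm
  simp only [Finset.mem_biUnion, Finset.mem_range, Finset.mem_filter, mem_monicsOfDegree]
  refine ⟨fun ⟨_, _, ⟨hg, _⟩, hgf⟩ => ⟨hg, hgf⟩, fun ⟨hg, hgf⟩ => ⟨_, ?_, ⟨hg, rfl⟩, hgf⟩⟩
  exact Nat.lt_succ_of_le (natDegree_le_of_dvd hgf hmonic.ne_zero)

/- This is `T * A' = (T * A' / A) * A` for the `L`-series `A`, read off at `T ^ n`. -/
theorem natCast_mul_monicSum [CommSemiring R] {L : F[X] → R}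
    (hL : ∀ f g : F[X], f.Monic → g.Monic → L (f * g) = L f * L g) (n : ℕ) :
    n * monicSum L n =
      ∑ ij ∈ antidiagonal n, vonMangoldtSum L ij.1 * monicSum L ij.2 := by
  calc
    n * monicSum L n = ∑ f ∈ monicsOfDegree F n, ∑ ij ∈ antidiagonal n,
        ∑ g ∈ monicsOfDegree F ij.1 with g ∣ f, (polyVonMangoldt g : R) * L f := by
      rw [monicSum, Finset.mul_sum]
      refine Finset.sum_congr rfl fun f hf => ?_
      simp only [← Finset.sum_mul, ← Nat.cast_sum, sum_antidiagonal_polyVonMangoldt hf]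
    _ = ∑ ij ∈ antidiagonal n, ∑ g ∈ monicsOfDegree F ij.1,
        (polyVonMangoldt g : R) * ∑ f ∈ monicsOfDegree F n with g ∣ f, L f := by
      simp only [Finset.mul_sum, Finset.sum_filter, mul_ite, mul_zero]
      rw [Finset.sum_comm]
      exact Finset.sum_congr rfl fun ij _ => Finset.sum_comm
    _ = ∑ ij ∈ antidiagonal n, vonMangoldtSum L ij.1 * monicSum L ij.2 := by
      refine Finset.sum_congr rfl fun ij hij => ?_
      rw [vonMangoldtSum, Finset.sum_mul]
      refine Finset.sum_congr rfl fun g hg => ?_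
      rw [← mem_antidiagonal.mp hij, sum_monicsOfDegree_dvd hL hg, mul_assoc]

theorem vonMangoldtSum_zero [Semiring R] (L : F[X] → R) : vonMangoldtSum L 0 = 0 := by
  simp [vonMangoldtSum, monicsOfDegree_zero, polyVonMangoldt, not_isPrimePow_one]

/- The hypotheses say that the `L`-series is the polynomial `1 + A₁ * T`, whose logarithmic
derivative is a geometric series. -/
theorem vonMangoldtSum_succ_of_monicSum_eq_zero [CommRing R] {L : F[X] → R} (hL₁ : L 1 = 1)
    (hL : ∀ f g : F[X], f.Monic → g.Monic → L (f * g) = L f * L g)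
    (hzero : ∀ n, 2 ≤ n → monicSum L n = 0) (n : ℕ) :
    vonMangoldtSum L (n + 1) = (-1) ^ n * monicSum L 1 ^ (n + 1) := by
  have hA₀ : monicSum L 0 = 1 := by rw [monicSum_zero, hL₁]
  induction n with
  | zero =>
    have hnewton := natCast_mul_monicSum hL 1
    simpa [Finset.Nat.antidiagonal_succ, vonMangoldtSum_zero, hA₀] using hnewton.symm
  | succ n ih =>
    have hnewton := natCast_mul_monicSum hL (n + 2)
    rw [hzero _ (Nat.le_add_left 2 n), mul_zero, Finset.Nat.sum_antidiagonal_succ',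
      Finset.Nat.sum_antidiagonal_succ', Finset.sum_eq_zero fun ij _ => ?_, hA₀] at hnewton
    · linear_combination -hnewton - monicSum L 1 * ih
    · rw [hzero _ (Nat.le_add_left 2 ij.2), mul_zero]

end NewtonIdentity

section PolyChar

variable {A R : Type*} [CommRing A] [CommRing R]

/-- The character `f ↦ χ(s) ψ(c)` of monic polynomials, where `s` is the product and `c` the sum of
the roots of `f`, expressed through the coefficients of `f`. -/
def polyChar (χ : MulChar A R) (ψ : AddChar A R) (f : A[X]) : R :=
  χ ((-1) ^ f.natDegree * f.coeff 0) * ψ (-f.nextCoeff)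

theorem polyChar_one (χ : MulChar A R) (ψ : AddChar A R) : polyChar χ ψ 1 = 1 := by
  simp [polyChar, nextCoeff]

theorem polyChar_mul (χ : MulChar A R) (ψ : AddChar A R) (f g : A[X])
    (hf : f.Monic) (hg : g.Monic) :
    polyChar χ ψ (f * g) = polyChar χ ψ f * polyChar χ ψ g := by
  simp only [polyChar, hf.natDegree_mul hg, hf.nextCoeff_mul hg, mul_coeff_zero, neg_add, pow_add,
    AddChar.map_add_eq_mul, mul_mul_mul_comm _ _ (f.coeff 0), map_mul]
  ring

variable [Nontrivial A]

theorem polyChar_X_sub_C (χ : MulChar A R) (ψ : AddChar A R) (a : A) :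
    polyChar χ ψ (X - C a) = χ a * ψ a := by
  simp [polyChar]

theorem monicSum_polyChar_of_two_le [Finite A] [IsDomain R] {χ : MulChar A R} (hχ : χ ≠ 1)
    (ψ : AddChar A R) {n : ℕ} (hn : 2 ≤ n) : monicSum (polyChar χ ψ) n = 0 := by
  have := Fintype.ofFinite A
  obtain ⟨n, rfl⟩ := Nat.exists_eq_add_of_le' hn
  rw [monicSum_succ]
  refine Finset.sum_eq_zero fun g hg => ?_
  have hdeg (c : A) : (g * X + C c).natDegree = n + 2 :=
    (mem_monicsOfDegree.mp (mul_X_add_C_mem_monicsOfDegree hg c)).2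
  have hnext (c : A) : (g * X + C c).nextCoeff = g.coeff n := by
    rw [nextCoeff_of_natDegree_pos (by rw [hdeg]; exact Nat.succ_pos _), hdeg]
    simp
  simp only [polyChar, hdeg, hnext]
  simp [← Finset.sum_mul, ← Finset.mul_sum, MulChar.sum_eq_zero_of_ne_one hχ]

theorem monicSum_polyChar_one [Fintype A] (χ : MulChar A R) (ψ : AddChar A R) :
    monicSum (polyChar χ ψ) 1 = gaussSum χ ψ := by
  simp only [monicSum_succ, monicsOfDegree_zero, Finset.sum_singleton, gaussSum, one_mul,
    ← polyChar_X_sub_C, sub_eq_add_neg, ← C_neg]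
  exact (Equiv.sum_comp (Equiv.neg A) fun c => polyChar χ ψ (X + C c)).symm

theorem vonMangoldtSum_polyChar {F : Type*} [Field F] [Fintype F] [IsDomain R] {χ : MulChar F R}
    (hχ : χ ≠ 1) (ψ : AddChar F R) (n : ℕ) :
    vonMangoldtSum (polyChar χ ψ) (n + 1) = (-1) ^ n * gaussSum χ ψ ^ (n + 1) := by
  rw [vonMangoldtSum_succ_of_monicSum_eq_zero (polyChar_one χ ψ) (polyChar_mul χ ψ)
    (fun _ => monicSum_polyChar_of_two_le hχ ψ), monicSum_polyChar_one]

end PolyChar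

section HasseDavenport

open Module IntermediateField

variable {F E R : Type*} [Field F] [Field E] [Algebra F E]

section Lifts

variable [CommRing R]

/-- The lift `χ ∘ N` of a multiplicative character of `F` along the norm of `E / F`. -/
def normLift [FiniteDimensional F E] : MulChar F R →* MulChar E R where
  toFun χ :=
    { χ.toMonoidHom.comp (Algebra.norm F) with
      map_nonunit' := fun x hx => χ.map_nonunit fun hNx => hx <| by
        rw [isUnit_iff_ne_zero] at hNx ⊢
        exact Algebra.norm_ne_zero_iff.mp hNx }
  map_one' := MulChar.ext fun x =>
    (MulChar.one_apply (x.isUnit.map (Algebra.norm F))).trans (MulChar.one_apply_coe x).symm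
  map_mul' _ _ := rfl

theorem normLift_apply [FiniteDimensional F E] (χ : MulChar F R) (x : E) :
    (normLift χ : MulChar E R) x = χ (Algebra.norm F x) :=
  rfl

variable (E) in
/-- The lift `ψ ∘ Tr` of an additive character of `F` along the trace of `E / F`. -/
def traceLift (ψ : AddChar F R) : AddChar E R :=
  ψ.compAddMonoidHom (Algebra.trace F E).toAddMonoidHom

theorem traceLift_apply (ψ : AddChar F R) (x : E) :
    traceLift E ψ x = ψ (Algebra.trace F E x) :=
  rfl

end Lifts

section FieldPoly

variable [FiniteDimensional F E]

variable (F) in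
/-- The characteristic polynomial over `F` of multiplication by `x` on `E`, written as a power of
the minimal polynomial of `x`. -/
def fieldPoly (x : E) : F[X] :=
  minpoly F x ^ finrank F⟮x⟯ E

theorem finrank_mul_natDegree_minpoly (x : E) :
    finrank F⟮x⟯ E * (minpoly F x).natDegree = finrank F E := by
  rw [← adjoin.finrank (.of_finite F x), mul_comm, finrank_mul_finrank]

theorem fieldPoly_mem_monicsOfDegree [Finite F] (x : E) :
    fieldPoly F x ∈ monicsOfDegree F (finrank F E) :=
  mem_monicsOfDegree.mpr ⟨(minpoly.monic (.of_finite F x)).pow _,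
    by rw [fieldPoly, natDegree_pow, finrank_mul_natDegree_minpoly]⟩

theorem norm_eq_coeff_zero_fieldPoly (x : E) :
    Algebra.norm F x = (-1) ^ (fieldPoly F x).natDegree * (fieldPoly F x).coeff 0 := by
  have hgen := Algebra.PowerBasis.norm_gen_eq_coeff_zero_minpoly
    (adjoin.powerBasis (IsIntegral.of_finite F x))
  rw [adjoin.powerBasis_gen, minpoly_gen, adjoin.powerBasis_dim] at hgen
  rw [Algebra.norm_eq_norm_adjoin, hgen, fieldPoly, natDegree_pow, mul_pow, ← pow_mul,
    mul_comm (finrank _ _), coeff_zero_eq_eval_zero, coeff_zero_eq_eval_zero, eval_pow]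

theorem trace_eq_neg_nextCoeff_fieldPoly (x : E) :
    Algebra.trace F E x = -(fieldPoly F x).nextCoeff := by
  rw [trace_eq_finrank_mul_minpoly_nextCoeff, fieldPoly,
    (minpoly.monic (.of_finite F x)).nextCoeff_pow, nsmul_eq_mul, mul_neg]

theorem polyChar_fieldPoly [CommRing R] (χ : MulChar F R) (ψ : AddChar F R) (x : E) :
    polyChar χ ψ (fieldPoly F x) = normLift χ x * traceLift E ψ x := by
  rw [polyChar, ← norm_eq_coeff_zero_fieldPoly, ← trace_eq_neg_nextCoeff_fieldPoly,
    normLift_apply, traceLift_apply]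

theorem fieldPoly_eq_pow_iff {P : F[X]} (hP : Irreducible P) (hPm : P.Monic) {k : ℕ}
    (hk : k * P.natDegree = finrank F E) (x : E) :
    fieldPoly F x = P ^ k ↔ minpoly F x = P := by
  have hx : IsIntegral F x := .of_finite F x
  rw [fieldPoly, pow_eq_pow_iff_of_irreducible (minpoly.irreducible hx) hP (minpoly.monic hx) hPm
    finrank_pos.ne']
  refine and_iff_left_of_imp fun hxP => ?_
  rw [← finrank_mul_natDegree_minpoly x, hxP] at hk
  exact (Nat.eq_of_mul_eq_mul_right hP.natDegree_pos hk).symm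

end FieldPoly

theorem splits_map_of_natDegree_dvd_finrank [Finite F] [Finite E] {P : F[X]}
    (hP : Irreducible P) (hdvd : P.natDegree ∣ finrank F E) : (P.map (algebraMap F E)).Splits := by
  have := Fintype.ofFinite E
  have hPX := hP.natDegree_dvd_iff_dvd_X_pow_card_pow_sub_X.mp hdvd
  rw [← natCard_eq_pow_finrank, Nat.card_eq_fintype_card] at hPX
  refine (FiniteField.isSplittingField_sub E F).splits.of_dvd ?_
    (Polynomial.map_dvd (algebraMap F E) hPX)
  exact map_ne_zero (FiniteField.X_pow_card_sub_X_ne_zero F Fintype.one_lt_card)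

open scoped Finset

variable [Fintype E]

theorem card_filter_minpoly_eq [Finite F] {P : F[X]} (hP : Irreducible P) (hPm : P.Monic)
    (hdvd : P.natDegree ∣ finrank F E) : #{x : E | minpoly F x = P} = P.natDegree := by
  rw [← card_rootSet_eq_natDegree (PerfectField.separable_of_irreducible hP)
    (splits_map_of_natDegree_dvd_finrank hP hdvd), ← Set.toFinset_card]
  congr 1
  ext x
  simp only [Finset.mem_filter_univ, Set.mem_toFinset, mem_rootSet]
  constructor
  · rintro rfl
    exact ⟨hP.ne_zero, minpoly.aeval F x⟩
  · rintro ⟨-, hx⟩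
    exact (minpoly.eq_of_irreducible_of_monic hP hx hPm).symm

theorem card_filter_fieldPoly_eq [Finite F] {f : F[X]}
    (hf : f ∈ monicsOfDegree F (finrank F E)) :
    #{x : E | fieldPoly F x = f} = polyVonMangoldt f := by
  obtain ⟨hmonic, hdeg⟩ := mem_monicsOfDegree.mp hf
  by_cases hΛ : polyVonMangoldt f = 0
  · rw [hΛ, Finset.card_eq_zero, Finset.filter_eq_empty_iff]
    rintro x - rfl
    have hx : IsIntegral F x := .of_finite F x
    rw [fieldPoly, polyVonMangoldt_pow (minpoly.irreducible hx) finrank_pos.ne'] at hΛ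
    exact (minpoly.natDegree_pos hx).ne' hΛ
  · obtain ⟨P, k, hPm, hP, hk, rfl⟩ := exists_pow_eq_of_polyVonMangoldt_ne_zero hmonic hΛ
    rw [natDegree_pow] at hdeg
    simp only [fieldPoly_eq_pow_iff hP hPm hdeg]
    rw [polyVonMangoldt_pow hP hk, card_filter_minpoly_eq hP hPm (Dvd.intro_left k hdeg)]

theorem gaussSum_normLift_traceLift_eq_vonMangoldtSum [Finite F] [CommRing R]
    (χ : MulChar F R) (ψ : AddChar F R) :
    gaussSum (normLift χ) (traceLift E ψ) = vonMangoldtSum (polyChar χ ψ) (finrank F E) := by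
  simp only [gaussSum, ← polyChar_fieldPoly]
  rw [← Finset.sum_fiberwise_of_maps_to' fun x _ => fieldPoly_mem_monicsOfDegree (F := F) x]
  refine Finset.sum_congr rfl fun f hf => ?_
  rw [Finset.sum_const, card_filter_fieldPoly_eq hf, nsmul_eq_mul]

theorem gaussSum_normLift_traceLift [Fintype F] [CommRing R] [IsDomain R] {χ : MulChar F R}
    (hχ : χ ≠ 1) (ψ : AddChar F R) :
    gaussSum (normLift χ) (traceLift E ψ) =
      (-1) ^ (finrank F E - 1) * gaussSum χ ψ ^ finrank F E := by
  obtain ⟨n, hn⟩ := Nat.exists_eq_add_one_of_ne_zero (finrank_pos (R := F) (M := E)).ne'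
  rw [gaussSum_normLift_traceLift_eq_vonMangoldtSum, hn, vonMangoldtSum_polyChar hχ,
    Nat.add_sub_cancel]

end HasseDavenport

section JacobiSum

variable {A F R : Type*} [CommRing A] [Field F] [Fintype F] [CommRing R]

theorem addChar_sum_eq_prod {ι : Type*} (ψ : AddChar A R) (s : Finset ι) (v : ι → A) :
    ψ (∑ i ∈ s, v i) = ∏ i ∈ s, ψ (v i) :=
  map_sum ψ.toAddMonoidHom v s

theorem gaussSum_mulShift_pow [Fintype A] (χ : MulChar A R) (ψ : AddChar A R) (a : A) (t : ℕ) :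
    gaussSum χ (ψ.mulShift a) ^ t = ∑ v : Fin t → A, χ (∏ i, v i) * ψ (a * ∑ i, v i) := by
  simp only [gaussSum, Fintype.sum_pow, AddChar.mulShift_apply, Finset.prod_mul_distrib,
    map_prod, Finset.mul_sum, addChar_sum_eq_prod]

theorem gaussSum_mulShift_of_ne_one [IsDomain R] {χ : MulChar F R} (hχ : χ ≠ 1)
    (ψ : AddChar F R) (a : F) : gaussSum χ (ψ.mulShift a) = χ⁻¹ a * gaussSum χ ψ := by
  rcases eq_or_ne a 0 with rfl | ha
  · rw [AddChar.mulShift_zero, gaussSum_one_right hχ, MulChar.map_zero, zero_mul]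
  · exact gaussSum_mulShift_eq χ ψ (Units.mk0 a ha)

theorem sum_mul_gaussSum_mulShift_neg_pow (χ : MulChar F ℂ) {ψ : AddChar F ℂ} (hψ : ψ ≠ 1)
    (t : ℕ) : ∑ c, ψ c * gaussSum χ (ψ.mulShift (-c)) ^ t = Fintype.card F * jacobiS F t χ := by
  have hsum (b : F) : ∑ c, ψ (c * b) = if b = 0 then (Fintype.card F : ℂ) else 0 := by
    rw [AddChar.sum_mulShift b (AddChar.IsPrimitive.of_ne_one hψ), Nat.cast_ite, Nat.cast_zero]
  calc
    ∑ c, ψ c * gaussSum χ (ψ.mulShift (-c)) ^ t =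
        ∑ v : Fin t → F, χ (∏ i, v i) * ∑ c, ψ (c * (1 - ∑ i, v i)) := by
      simp only [gaussSum_mulShift_pow, Finset.mul_sum]
      rw [Finset.sum_comm]
      refine Finset.sum_congr rfl fun v _ => Finset.sum_congr rfl fun c _ => ?_
      rw [mul_left_comm, ← AddChar.map_add_eq_mul, ← Finset.mul_sum]
      ring_nf
    _ = Fintype.card F * jacobiS F t χ := by
      rw [jacobiS, Finset.mul_sum]
      refine Finset.sum_congr rfl fun v _ => ?_
      rw [hsum, sub_eq_zero, eq_comm (a := (1 : F))]
      split_ifs <;> ring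

theorem gaussSum_pow_mul_gaussSum_inv_pow {χ : MulChar F ℂ} (hχ : χ ≠ 1) {ψ : AddChar F ℂ}
    (hψ : ψ ≠ 1) {t : ℕ} (ht : t ≠ 0) :
    χ⁻¹ ((-1) ^ t) * (gaussSum χ ψ ^ t * gaussSum (χ⁻¹ ^ t) ψ) =
      Fintype.card F * jacobiS F t χ := by
  rw [← sum_mul_gaussSum_mulShift_neg_pow χ hψ, gaussSum.eq_def (χ⁻¹ ^ t),
    Finset.mul_sum, Finset.mul_sum]
  refine Finset.sum_congr rfl fun c _ => ?_
  rw [gaussSum_mulShift_of_ne_one hχ, MulChar.pow_apply' _ ht, neg_eq_neg_one_mul c, map_mul,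
    map_pow]
  ring

end JacobiSum

section PowerCharacters

open Finset

theorem card_filter_pow_eq {G : Type*} [CommGroup G] [Fintype G] [DecidableEq G] (n : ℕ) (w : G) :
    #{x : G | x ^ n = w} = if ∃ y, y ^ n = w then #{x : G | x ^ n = 1} else 0 := by
  split_ifs with h
  · obtain ⟨y, rfl⟩ := h
    exact card_equiv (Equiv.mulRight y⁻¹) fun x => by simp [mul_pow, mul_inv_eq_one]
  · exact card_eq_zero.mpr (filter_false_of_mem fun x _ hx => h ⟨x, hx⟩)

theorem card_filter_pow_eq_one {G : Type*} [CommGroup G] [IsCyclic G] [Fintype G] [DecidableEq G]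
    {n : ℕ} (hn : n ∣ Fintype.card G) : #{x : G | x ^ n = 1} = n := by
  have hker := IsCyclic.card_powMonoidHom_ker G n
  rw [Nat.card_eq_fintype_card (α := G), Nat.gcd_eq_right hn] at hker
  rw [← Fintype.card_subtype, ← Nat.card_eq_fintype_card]
  exact hker

theorem exists_pow_eq_iff_pow_eq_one {G : Type*} [CommGroup G] [IsCyclic G] [Finite G] {n k : ℕ}
    (hG : Nat.card G = n * k) {u : G} : (∃ y, y ^ n = u) ↔ u ^ k = 1 := by
  have hn : n ≠ 0 := left_ne_zero_of_mul (hG ▸ Nat.card_pos.ne')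
  have hle : (powMonoidHom n : G →* G).range ≤ (powMonoidHom k).ker := by
    rintro _ ⟨y, rfl⟩
    rw [MonoidHom.mem_ker, powMonoidHom_apply, powMonoidHom_apply, ← pow_mul, ← hG,
      pow_card_eq_one']
  have heq : (powMonoidHom n : G →* G).range = (powMonoidHom k).ker := by
    refine Subgroup.eq_of_le_of_card_ge hle (le_of_eq ?_)
    rw [IsCyclic.card_powMonoidHom_ker, IsCyclic.card_powMonoidHom_range, hG,
      Nat.gcd_mul_left_left, Nat.gcd_mul_right_left,
      Nat.mul_div_cancel_left _ (Nat.pos_of_ne_zero hn)]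
  exact SetLike.ext_iff.mp heq u

theorem exists_pow_eq_iff_forall_mulChar {M R : Type*} [CommMonoid M] [Finite M] [CommRing R]
    [IsDomain R] [HasEnoughRootsOfUnity R (Monoid.exponent Mˣ)] (n : ℕ) (u : Mˣ) :
    (∃ y, y ^ n = u) ↔ ∀ χ : MulChar M R, χ ^ n = 1 → χ u = 1 := by
  let H : Subgroup Mˣ := (powMonoidHom n).range
  have hdual : ∀ χ, χ ∈ (MulChar.subgroupOrderIsoSubgroupMulChar M R H).ofDual ↔ χ ^ n = 1 := by
    simp [H, MulChar.eq_one_iff, MulChar.pow_apply_coe]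
  change u ∈ H ↔ _
  have := MulChar.mem_subgroupOrderIsoSubgroupMulChar_symm_iff (m := u)
    (X := (MulChar.subgroupOrderIsoSubgroupMulChar M R H).ofDual)
  simpa only [OrderDual.toDual_ofDual, OrderIso.symm_apply_apply, hdual] using this

variable {F E : Type*} [Field F] [Field E] [Algebra F E]

variable (F) in
/-- The group `H_n` of complex multiplicative characters of `F` whose `n`-th power is trivial,
as a finset. -/
def mulCharsOfPow [Finite F] (n : ℕ) : Finset (MulChar F ℂ) :=
  (Set.toFinite {χ | χ ^ n = 1}).toFinset

theorem mem_mulCharsOfPow [Finite F] {n : ℕ} {χ : MulChar F ℂ} :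
    χ ∈ mulCharsOfPow F n ↔ χ ^ n = 1 :=
  Set.Finite.mem_toFinset _

theorem card_mulCharsOfPow [Fintype F] (n : ℕ) :
    #(mulCharsOfPow F n) = #{x : Fˣ | x ^ n = 1} := by
  obtain ⟨e⟩ := MulChar.mulEquiv_units F ℂ
  refine card_equiv e.toEquiv fun χ => ?_
  rw [mem_mulCharsOfPow, mem_filter_univ, ← map_eq_one_iff e e.injective, map_pow]
  rfl

theorem mul_sum_mulCharsOfPow [Finite F] {n : ℕ} {χ : MulChar F ℂ} (hχ : χ ^ n = 1) (x : F) :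
    χ x * ∑ lam ∈ mulCharsOfPow F n, lam x = ∑ lam ∈ mulCharsOfPow F n, lam x := by
  rw [mul_sum]
  refine sum_equiv (Equiv.mulLeft χ) (fun lam => ?_) fun lam _ => ?_
  · rw [mem_mulCharsOfPow, mem_mulCharsOfPow, Equiv.coe_mulLeft, mul_pow, hχ, one_mul]
  · rw [Equiv.coe_mulLeft, MulChar.mul_apply]

theorem sum_mulCharsOfPow [Fintype F] (n : ℕ) (u : Fˣ) :
    ∑ lam ∈ mulCharsOfPow F n, lam u = #{x : Fˣ | x ^ n = u} := by
  rw [card_filter_pow_eq]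
  split_ifs with h
  · rw [exists_pow_eq_iff_forall_mulChar (R := ℂ)] at h
    rw [sum_congr rfl fun lam hlam => h lam (mem_mulCharsOfPow.mp hlam), sum_const, nsmul_one,
      card_mulCharsOfPow]
  · rw [exists_pow_eq_iff_forall_mulChar (R := ℂ)] at h
    push Not at h
    obtain ⟨χ, hχn, hχu⟩ := h
    rw [Nat.cast_zero]
    exact (mul_left_eq_self₀.mp (mul_sum_mulCharsOfPow hχn u)).resolve_left hχu

variable (F E) in
theorem natCard_sub_one_dvd [Finite E] : Nat.card F - 1 ∣ Nat.card E - 1 := by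
  rw [Module.natCard_eq_pow_finrank (K := F) (V := E)]
  simpa only [one_pow] using Nat.sub_dvd_pow_sub_pow (Nat.card F) 1 _

/- By Euler's criterion, since `(N w) ^ ((q - 1) / n) = w ^ ((|E| - 1) / n)`. -/
theorem exists_pow_eq_norm_iff [Fintype F] [Finite E] {n : ℕ}
    (hn : n ∣ Fintype.card F - 1) (w : Eˣ) :
    (∃ y, y ^ n = Units.map (Algebra.norm F) w) ↔ ∃ x, x ^ n = w := by
  obtain ⟨k, hk⟩ := hn
  have hF : Nat.card Fˣ = n * k := by
    rw [Nat.card_eq_fintype_card, Fintype.card_units, hk]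
  set j := (Nat.card E - 1) / (Nat.card F - 1)
  have hE : Nat.card Eˣ = n * (j * k) := by
    rw [Nat.card_units, mul_left_comm, ← hF, Nat.card_units,
      Nat.div_mul_cancel (natCard_sub_one_dvd F E)]
  rw [exists_pow_eq_iff_pow_eq_one hF, exists_pow_eq_iff_pow_eq_one hE, pow_mul, Units.ext_iff,
    Units.ext_iff, ← (algebraMap F E).injective.eq_iff]
  simp only [Units.val_pow_eq_pow_val, Units.coe_map, map_pow,
    FiniteField.algebraMap_norm_eq_pow, Units.val_one, map_one, j]

variable [Fintype F] [Fintype E]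

theorem card_filter_pow_eq_norm {n : ℕ} (hn : n ∣ Fintype.card F - 1) (w : Eˣ) :
    #{y : Fˣ | y ^ n = Units.map (Algebra.norm F) w} = #{x : Eˣ | x ^ n = w} := by
  have hE : n ∣ Fintype.card Eˣ := by
    rw [Fintype.card_units, Fintype.card_eq_nat_card]
    exact hn.trans (Fintype.card_eq_nat_card (α := F) ▸ natCard_sub_one_dvd F E)
  simp only [card_filter_pow_eq _ (Units.map _ w), card_filter_pow_eq _ w,
    exists_pow_eq_norm_iff hn, card_filter_pow_eq_one hE]
  rw [card_filter_pow_eq_one (by rwa [Fintype.card_units])]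

theorem sum_units_comp_pow {n : ℕ} (hn : n ∣ Fintype.card F - 1) (f : Eˣ → ℂ) :
    ∑ x, f (x ^ n) = ∑ lam ∈ mulCharsOfPow F n, ∑ w : Eˣ, lam (Algebra.norm F (w : E)) * f w := by
  calc
    ∑ x, f (x ^ n) = ∑ w, #{x : Eˣ | x ^ n = w} * f w := by
      rw [← sum_fiberwise _ (· ^ n)]
      refine sum_congr rfl fun w _ => ?_
      rw [sum_congr rfl fun x hx => congrArg f (mem_filter.mp hx).2, sum_const, nsmul_eq_mul]
    _ = ∑ w : Eˣ, ∑ lam ∈ mulCharsOfPow F n, lam (Algebra.norm F (w : E)) * f w := by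
      refine sum_congr rfl fun w _ => ?_
      rw [← sum_mul, ← card_filter_pow_eq_norm hn, ← sum_mulCharsOfPow]
      rfl
    _ = ∑ lam ∈ mulCharsOfPow F n, ∑ w : Eˣ, lam (Algebra.norm F (w : E)) * f w := sum_comm

end PowerCharacters

section StandardCharacter

open Module

/-- The canonical additive character of a finite field `E` of characteristic `p`, as a bundled
version of `eChar p E`. -/
def stdChar (p : ℕ) [Fact p.Prime] (E : Type*) [Field E] [Algebra (ZMod p) E] : AddChar E ℂ :=
  traceLift E (ZMod.stdAddChar (N := p))

theorem stdChar_ne_one (p : ℕ) [Fact p.Prime] (E : Type*) [Field E] [Finite E]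
    [Algebra (ZMod p) E] : stdChar p E ≠ 1 := by
  obtain ⟨x, hx⟩ := Algebra.trace_surjective (ZMod p) E 1
  refine AddChar.ne_one_iff.mpr ⟨x, fun h => ?_⟩
  rw [stdChar, traceLift_apply, hx, ← AddChar.map_zero_eq_one (ZMod.stdAddChar (N := p))] at h
  exact one_ne_zero (ZMod.injective_stdAddChar h)

theorem traceLift_stdChar (p : ℕ) [Fact p.Prime] (F E : Type*) [Field F] [Finite F] [Field E]
    [Finite E] [Algebra F E] [Algebra (ZMod p) F] [Algebra (ZMod p) E] :
    traceLift E (stdChar p F) = stdChar p E := by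
  have : IsScalarTower (ZMod p) F E := .of_algebraMap_eq' (Subsingleton.elim _ _)
  ext x
  simp only [stdChar, traceLift_apply, Algebra.trace_trace]

theorem sum_units {K M : Type*} [Field K] [Fintype K] [AddCommMonoid M] {f : K → M}
    (h0 : f 0 = 0) : ∑ x : Kˣ, f x = ∑ x, f x := by
  refine Fintype.sum_of_injective _ Units.val_injective _ _ (fun x hx => ?_) fun _ => rfl
  have hx0 : x = 0 := by_contra fun h => hx ⟨Units.mk0 x h, rfl⟩
  rw [hx0, h0]

variable (p : ℕ) {F E : Type*} [Field F] [Fintype F] [Field E] [Fintype E] [Algebra F E]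
  [Algebra (ZMod p) E]

theorem sum_units_eChar_mul_pow {n : ℕ} (hn : n ∣ Fintype.card F - 1) (y : Eˣ) :
    ∑ x : Eˣ, eChar p E (y * (x : E) ^ n) =
      ∑ χ ∈ mulCharsOfPow F n, gaussSumN p F E χ⁻¹ * χ (Algebra.norm F (y : E)) := by
  simp only [← Units.val_pow_eq_pow_val]
  rw [sum_units_comp_pow hn fun w : Eˣ => eChar p E (y * w)]
  refine Finset.sum_equiv (Equiv.inv _) (fun χ => ?_) fun χ _ => ?_
  · rw [mem_mulCharsOfPow, mem_mulCharsOfPow, Equiv.inv_apply, inv_pow, inv_eq_one]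
  rw [Equiv.inv_apply, inv_inv, gaussSumN, Finset.sum_mul]
  refine Fintype.sum_equiv (Equiv.mulLeft y) _ _ fun w => ?_
  have hy : χ (Algebra.norm F (y : E)) * χ⁻¹ (Algebra.norm F (y : E)) = 1 := by
    rw [← MulChar.mul_apply, mul_inv_cancel, MulChar.one_apply (y.isUnit.map _)]
  rw [Equiv.coe_mulLeft, Units.val_mul, map_mul, map_mul]
  linear_combination (-(χ (Algebra.norm F (w : E)) * eChar p E (y * w))) * hy

theorem MM_eq_sum_gaussSumN [Algebra (ZMod p) F] {n N i₀ : ℕ} (γ : Eˣ)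
    (hn : (n : F) ≠ 0) (hN : N ∣ Fintype.card F - 1) {a : F} (ha : a ≠ 0) :
    MM p F E γ a n N i₀ = ∑ χ ∈ mulCharsOfPow F N,
      gaussSumN p F E χ⁻¹ * gaussSumN p F F (χ ^ finrank F E) *
        χ ((-n * a⁻¹) ^ finrank F E * Algebra.norm F (γ : E) ^ i₀) := by
  set t := finrank F E
  have hinner (c : Fˣ) :
      ∑ x : Eˣ, eChar p E (algebraMap F E c * (γ : E) ^ i₀ * (x : E) ^ N) =
        ∑ χ ∈ mulCharsOfPow F N,
          gaussSumN p F E χ⁻¹ * χ (c ^ t * Algebra.norm F (γ : E) ^ i₀) := by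
    have := sum_units_eChar_mul_pow p hN (Units.map (algebraMap F E) c * γ ^ i₀)
    simpa using this
  simp only [MM, hinner, Finset.mul_sum]
  rw [Finset.sum_comm]
  refine Finset.sum_congr rfl fun χ _ => ?_
  have hb : -n * a⁻¹ ≠ 0 := mul_ne_zero (neg_ne_zero.mpr hn) (inv_ne_zero ha)
  rw [gaussSumN.eq_def p F F, Finset.mul_sum, Finset.sum_mul]
  refine (Fintype.sum_equiv (Equiv.mulLeft (Units.mk0 _ hb)) _ _ fun c => ?_).symm
  have hc : -((n : F)⁻¹ * (-n * a⁻¹ * c) * a) = c := by field_simp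
  rw [Equiv.coe_mulLeft, Units.val_mul, Units.val_mk0, hc, Algebra.norm_self, MonoidHom.id_apply,
    MulChar.pow_apply_coe]
  simp only [mul_pow, map_mul, map_pow]
  ring

variable [Fact p.Prime]

theorem eChar_eq_stdChar (x : E) : eChar p E x = stdChar p E x := by
  rw [eChar, stdChar, traceLift_apply, ZMod.stdAddChar_apply, ZMod.toCircle_apply]

theorem gaussSumN_eq_gaussSum_normLift (χ : MulChar F ℂ) :
    gaussSumN p F E χ = gaussSum (normLift χ) (stdChar p E) := by
  rw [gaussSum, ← sum_units (by rw [MulChar.map_zero, zero_mul])]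
  refine Finset.sum_congr rfl fun x _ => ?_
  rw [eChar_eq_stdChar, normLift_apply, mul_comm]

variable (F E) in
theorem gaussSumN_one : gaussSumN p F E 1 = -1 := by
  rw [gaussSumN_eq_gaussSum_normLift, map_one, gaussSum_one_left (stdChar_ne_one p E)]

variable [Algebra (ZMod p) F]

theorem gaussSumN_self (χ : MulChar F ℂ) : gaussSumN p F F χ = gaussSum χ (stdChar p F) := by
  have : normLift χ = χ := MulChar.ext fun x => by
    rw [normLift_apply, Algebra.norm_self, MonoidHom.id_apply]
  rw [gaussSumN_eq_gaussSum_normLift, this]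

theorem gaussSumN_eq_pow {χ : MulChar F ℂ} (hχ : χ ≠ 1) :
    gaussSumN p F E χ = (-1) ^ (finrank F E - 1) * gaussSumN p F F χ ^ finrank F E := by
  rw [gaussSumN_eq_gaussSum_normLift, ← traceLift_stdChar p F E,
    gaussSum_normLift_traceLift hχ, gaussSumN_self]

theorem gaussSumN_inv_mul_gaussSumN_pow {χ : MulChar F ℂ} (hχ : χ ≠ 1) (b c : F) :
    gaussSumN p F E χ⁻¹ * gaussSumN p F F (χ ^ finrank F E) * χ (b ^ finrank F E * c) =
      (-1) ^ (finrank F E - 1) * Fintype.card F *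
        (jacobiS F (finrank F E) χ⁻¹ * χ ((-b) ^ finrank F E * c)) := by
  set t := finrank F E
  have hjacobi := gaussSum_pow_mul_gaussSum_inv_pow (inv_ne_one.mpr hχ) (stdChar_ne_one p F)
    (t := t) finrank_pos.ne'
  rw [inv_inv] at hjacobi
  have hb : χ (b ^ t * c) = χ ((-1) ^ t) * χ ((-b) ^ t * c) := by
    rw [← map_mul, ← mul_assoc, ← mul_pow, neg_one_mul, neg_neg]
  rw [gaussSumN_eq_pow p (inv_ne_one.mpr hχ), gaussSumN_self, gaussSumN_self, hb]
  linear_combination (-1) ^ (t - 1) * χ ((-b) ^ t * c) * hjacobi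

theorem sum_gaussSumN_eq_sum_jacobiS (N : ℕ) {b c : F} (hb : b ≠ 0) (hc : c ≠ 0) :
    ∑ χ ∈ mulCharsOfPow F N,
        gaussSumN p F E χ⁻¹ * gaussSumN p F F (χ ^ finrank F E) * χ (b ^ finrank F E * c) =
      1 + (-1) ^ (finrank F E - 1) * Fintype.card F * ∑ χ ∈ (mulCharsOfPow F N).erase 1,
        jacobiS F (finrank F E) χ⁻¹ * χ ((-b) ^ finrank F E * c) := by
  have hone : (1 : MulChar F ℂ) (b ^ finrank F E * c) = 1 :=
    MulChar.one_apply (mul_ne_zero (pow_ne_zero _ hb) hc).isUnit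
  rw [← Finset.add_sum_erase _ _ (mem_mulCharsOfPow.mpr (one_pow N)), Finset.mul_sum, inv_one,
    one_pow, gaussSumN_one, gaussSumN_one, hone]
  congr 1
  · norm_num
  · exact Finset.sum_congr rfl fun χ hχ =>
      gaussSumN_inv_mul_gaussSumN_pow p (Finset.ne_of_mem_erase hχ) b c

end StandardCharacter

theorem stmt6_general (p : ℕ) [Fact p.Prime] (F E : Type*) [Field F] [Fintype F] [Field E]
    [Fintype E] [Algebra F E] [Algebra (ZMod p) F] [Algebra (ZMod p) E] {n N : ℕ} (i₀ : ℕ)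
    (hn : ¬ p ∣ n) (hN : N ∣ Fintype.card F - 1) (γ : Eˣ) {a a₀ : F} (ha : a ≠ 0)
    (ha₀ : a₀ = -n * a⁻¹) :
    MM p F E γ a n N i₀ = (∑ᶠ (χ : MulChar F ℂ) (_ : χ ^ N = 1),
      gaussSumN p F E χ⁻¹ * gaussSumN p F F (χ ^ Module.finrank F E) *
        χ (a₀ ^ Module.finrank F E * Algebra.norm F (γ : E) ^ i₀)) ∧
    MM p F E γ a n N i₀ = 1 + (-1) ^ (Module.finrank F E - 1) * (Fintype.card F : ℂ) *
      ∑ᶠ (χ : MulChar F ℂ) (_ : χ ^ N = 1 ∧ χ ≠ 1), jacobiS F (Module.finrank F E) χ⁻¹ *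
        χ ((-a₀) ^ Module.finrank F E * Algebra.norm F (γ : E) ^ i₀) := by
  have : CharP F p := charP_of_injective_algebraMap (algebraMap (ZMod p) F).injective p
  have hn' : (n : F) ≠ 0 := mt (CharP.cast_eq_zero_iff F p n).mp hn
  have ha₀' : a₀ ≠ 0 := ha₀ ▸ mul_ne_zero (neg_ne_zero.mpr hn') (inv_ne_zero ha)
  have hγ : Algebra.norm F (γ : E) ^ i₀ ≠ 0 := pow_ne_zero _ (γ.isUnit.map (Algebra.norm F)).ne_zero
  have hgauss := MM_eq_sum_gaussSumN p (i₀ := i₀) γ hn' hN ha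
  rw [← ha₀] at hgauss
  rw [finsum_cond_eq_sum_of_cond_iff _ fun _ => mem_mulCharsOfPow.symm,
    finsum_cond_eq_sum_of_cond_iff (t := (mulCharsOfPow F N).erase 1) _ fun _ => by
      rw [Finset.mem_erase, mem_mulCharsOfPow, and_comm]]
  exact ⟨hgauss, hgauss.trans (sum_gaussSumN_eq_sum_jacobiS p N ha₀' hγ)⟩

/-- If `p ∤ m/t`, `d ∣ h` and `a ≠ 0` then, with `a_0 = −(m/t)·a⁻¹`,
`M_t = Σ_{λ∈H_{s/d}} G_t(λ̄)·G_1(λ^t)·λ(a_0^t·g^{i_0})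
     = 1 + (−1)^{t−1}·q·Σ_{λ∈H_{s/d}^*} J_t(λ̄)·λ((−a_0)^t·g^{i_0})`. -/
theorem stmt6 (p r m s h t d i0 : ℕ) [Fact p.Prime] (hr : 0 < r) (hm : 2 ≤ m)
    (ht : t ∣ m) (ht0 : 0 < t)
    (F E : Type*) [Field F] [Fintype F] [Field E] [Fintype E]
    [Algebra F E] [Algebra (ZMod p) F] [Algebra (ZMod p) E]
    (hF : Fintype.card F = p ^ r) (hE : Fintype.card E = Fintype.card F ^ t)
    (g : Fˣ) (hg : ∀ u : Fˣ, u ∈ Subgroup.zpowers g)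
    (γ : Eˣ) (hγ : ∀ u : Eˣ, u ∈ Subgroup.zpowers γ)
    (hγg : Algebra.norm F ((γ : Eˣ) : E) = (g : F))
    (hs : 0 < s) (hsq : s ∣ Fintype.card F - 1) (hh : h < s)
    (hd : d = Nat.gcd (m / t) s)
    (hpmt : ¬ p ∣ m / t) (hdh : d ∣ h)
    (hi0 : i0 < s / d ∧ (m / (d * t)) * i0 ≡ h / d [MOD s / d])
    (a : F) (ha : a ≠ 0) (a0 : F) (ha0 : a0 = -(((m / t : ℕ) : F)) * a⁻¹) :
    MM p F E ((γ : Eˣ) : E) a (m / t) (s / d) i0 =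
      (∑ᶠ (lam : MulChar F ℂ) (_ : lam ^ (s / d) = 1),
        gaussSumN p F E lam⁻¹ * gaussSumN p F F (lam ^ t) * lam (a0 ^ t * (g : F) ^ i0)) ∧
    MM p F E ((γ : Eˣ) : E) a (m / t) (s / d) i0 =
      1 + (-1 : ℂ) ^ (t - 1) * (Fintype.card F : ℂ) *
        ∑ᶠ (lam : MulChar F ℂ) (_ : lam ^ (s / d) = 1 ∧ lam ≠ 1),
          jacobiS F t lam⁻¹ * lam ((-a0) ^ t * (g : F) ^ i0) := by
  obtain rfl : Module.finrank F E = t := Nat.pow_right_injective Fintype.one_lt_card <|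
    Module.card_eq_pow_finrank.symm.trans hE
  have hN : s / d ∣ Fintype.card F - 1 :=
    (Nat.div_dvd_of_dvd (hd ▸ Nat.gcd_dvd_right _ _)).trans hsq
  rw [← hγg]
  exact stmt6_general p F E i0 hpmt hN γ ha ha0

end
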